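/- Let G be an abelian group and let S be a zero-sum free sequence over G, i.e., no nonempty sub-multiset of S has sum 0. Then |Σ(S)| ≥ |S| + |supp(S)| − 1, where Σ(S) is the set of all sums of nonempty sub-multisets of S and supp(S) is the set of distinct elements occurring in S. -/

import Mathlib

/-!
Write `Σ₀(S)` for the set of all subsums of a zero-sum free sequence `S`, the empty one included;
the claim is `|Σ₀(S)| ≥ |S| + |supp S|`. Removing an element `a` of `S` loses at least the subsum
`σ(S)`. If nothing else is lost, then `Σ₀(S - a) = Σ₀(S) \ {σ(S)}`, and counting shows that the
translate `a + Σ₀(S - a)` is all of `Σ₀(S) \ {0}`. At most one `a` translates `Σ₀(S) \ {σ(S)}` onto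
`Σ₀(S) \ {0}`, so if `S` has two distinct elements, then removing one of them loses two subsums,
while `|S| + |supp S|` drops by at most two.
-/

section Subsums

variable {G : Type*} [AddCommMonoid G] {S T : Multiset G}

/-- A sequence, encoded as a multiset, is zero-sum free if none of its nonempty subsequences has
sum `0`. -/
def IsZeroSumFree (S : Multiset G) : Prop :=
  ∀ T ≤ S, T ≠ 0 → T.sum ≠ 0

theorem IsZeroSumFree.mono (hS : IsZeroSumFree S) (hTS : T ≤ S) : IsZeroSumFree T :=
  fun U hU ↦ hS U (hU.trans hTS)

variable [DecidableEq G] {a x : G}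

/-- The set of sums of subsequences of `S`. Unlike in `Σ(S)`, the empty subsequence is allowed, so
that `0` is always a subsum. -/
def subsums (S : Multiset G) : Finset G :=
  (S.powerset.map Multiset.sum).toFinset

theorem mem_subsums : x ∈ subsums S ↔ ∃ T ≤ S, T.sum = x := by
  simp [subsums]

theorem zero_mem_subsums (S : Multiset G) : 0 ∈ subsums S :=
  mem_subsums.2 ⟨0, S.zero_le, Multiset.sum_zero⟩

theorem sum_mem_subsums (S : Multiset G) : S.sum ∈ subsums S :=
  mem_subsums.2 ⟨S, le_rfl, rfl⟩

theorem subsums_mono (hTS : T ≤ S) : subsums T ⊆ subsums S := by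
  intro x hx
  obtain ⟨U, hUT, hUx⟩ := mem_subsums.1 hx
  exact mem_subsums.2 ⟨U, hUT.trans hTS, hUx⟩

theorem IsZeroSumFree.coe_subsums_erase_zero (hS : IsZeroSumFree S) :
    ((subsums S).erase 0 : Set G) = {x | ∃ T ≤ S, T ≠ 0 ∧ T.sum = x} := by
  ext x
  simp only [Finset.coe_erase, Set.mem_sdiff, Finset.mem_coe, mem_subsums, Set.mem_singleton_iff,
    Set.mem_ofPred_eq]
  constructor
  · rintro ⟨⟨T, hTS, rfl⟩, hsum⟩
    exact ⟨T, hTS, fun hT ↦ hsum (hT ▸ Multiset.sum_zero), rfl⟩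
  · rintro ⟨T, hTS, hT, rfl⟩
    exact ⟨⟨T, hTS, rfl⟩, hS T hTS hT⟩

theorem IsZeroSumFree.image_add_subsums_erase_subset (hS : IsZeroSumFree S) (ha : a ∈ S) :
    (subsums (S.erase a)).image (a + ·) ⊆ (subsums S).erase 0 := by
  intro x hx
  obtain ⟨y, hy, rfl⟩ := Finset.mem_image.1 hx
  obtain ⟨T, hT, rfl⟩ := mem_subsums.1 hy
  have haT : a ::ₘ T ≤ S := Multiset.cons_erase ha ▸ Multiset.cons_le_cons a hT
  rw [← Multiset.sum_cons]
  exact Finset.mem_erase.2 ⟨hS _ haT Multiset.cons_ne_zero, mem_subsums.2 ⟨_, haT, rfl⟩⟩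

end Subsums

section Cancellation

variable {G : Type*} [AddCancelCommMonoid G] [DecidableEq G] {S T : Multiset G} {a b : G}

theorem IsZeroSumFree.sum_notMem_subsums_of_lt (hS : IsZeroSumFree S) (hTS : T < S) :
    S.sum ∉ subsums T := by
  intro hsum
  obtain ⟨U, hUT, hU⟩ := mem_subsums.1 hsum
  have hUS : U < S := hUT.trans_lt hTS
  obtain ⟨V, rfl⟩ := Multiset.le_iff_exists_add.1 hUS.le
  have hV : V ≠ 0 := by
    rintro rfl
    exact hUS.ne (add_zero U).symm
  have hVsum : V.sum = 0 := by simpa only [Multiset.sum_add, left_eq_add] using hU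
  exact hS V (Multiset.le_add_left V U) hV hVsum

theorem IsZeroSumFree.subsums_subset_erase_sum (hS : IsZeroSumFree S) (hTS : T < S) :
    subsums T ⊆ (subsums S).erase S.sum :=
  Finset.subset_erase.2 ⟨subsums_mono hTS.le, hS.sum_notMem_subsums_of_lt hTS⟩

theorem IsZeroSumFree.card_subsums_lt_card_subsums (hS : IsZeroSumFree S) (hTS : T < S) :
    (subsums T).card < (subsums S).card :=
  (Finset.card_le_card (hS.subsums_subset_erase_sum hTS)).trans_lt
    (Finset.card_erase_lt_of_mem (sum_mem_subsums S))

theorem IsZeroSumFree.card_lt_card_subsums (hS : IsZeroSumFree S) :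
    S.card < (subsums S).card := by
  induction S using Multiset.induction_on with
  | empty => exact Finset.card_pos.2 ⟨0, zero_mem_subsums 0⟩
  | cons a T ih =>
    have hT : T < a ::ₘ T := Multiset.lt_cons_self T a
    rw [Multiset.card_cons]
    exact (Nat.succ_le_of_lt (ih (hS.mono hT.le))).trans_lt (hS.card_subsums_lt_card_subsums hT)

theorem IsZeroSumFree.image_add_erase_sum_eq_erase_zero (hS : IsZeroSumFree S) (ha : a ∈ S)
    (hcard : (subsums S).card ≤ (subsums (S.erase a)).card + 1) :
    ((subsums S).erase S.sum).image (a + ·) = (subsums S).erase 0 := by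
  have hlose : subsums (S.erase a) = (subsums S).erase S.sum := by
    refine Finset.eq_of_subset_of_card_le
      (hS.subsums_subset_erase_sum (Multiset.erase_lt.2 ha)) ?_
    rw [Finset.card_erase_of_mem (sum_mem_subsums S)]
    exact Nat.sub_le_of_le_add hcard
  rw [← hlose]
  refine Finset.eq_of_subset_of_card_le (hS.image_add_subsums_erase_subset ha) ?_
  rw [Finset.card_image_of_injective _ (add_right_injective a),
    Finset.card_erase_of_mem (zero_mem_subsums S)]
  exact Nat.sub_le_of_le_add hcard

-- If `a ≠ b`, then `0 + a = b + c` with `c ≠ 0`, hence `c = a + d`, and cancelling `a` puts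
-- `b + d = 0` into `A \ {0}`.
theorem eq_of_image_add_erase_eq_erase_zero {A : Finset G} {s : G} (h0 : 0 ∈ A) (hs : s ≠ 0)
    (ha : (A.erase s).image (a + ·) = A.erase 0) (hb : (A.erase s).image (b + ·) = A.erase 0) :
    a = b := by
  by_contra hab
  have haA : a ∈ A.erase 0 :=
    ha ▸ Finset.mem_image.2 ⟨0, Finset.mem_erase.2 ⟨hs.symm, h0⟩, add_zero a⟩
  obtain ⟨c, hc, hbc : b + c = a⟩ := Finset.mem_image.1 (hb ▸ haA)
  have hc0 : c ≠ 0 := by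
    rintro rfl
    exact hab (hbc ▸ add_zero b)
  have hcA : c ∈ A.erase 0 := Finset.mem_erase.2 ⟨hc0, Finset.mem_of_mem_erase hc⟩
  obtain ⟨d, hd, had : a + d = c⟩ := Finset.mem_image.1 (ha ▸ hcA)
  have hbd : b + d = 0 := by
    apply add_left_cancel (a := a)
    rw [add_left_comm, had, hbc, add_zero]
  have hbdA : b + d ∈ A.erase 0 := hb ▸ Finset.mem_image_of_mem (b + ·) hd
  exact Finset.ne_of_mem_erase hbdA hbd

theorem IsZeroSumFree.exists_card_subsums_erase_add_two_le (hS : IsZeroSumFree S)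
    (ha : a ∈ S) (hb : b ∈ S) (hab : a ≠ b) :
    ∃ c ∈ S, (subsums (S.erase c)).card + 2 ≤ (subsums S).card := by
  by_contra! hgain
  have hsum : S.sum ≠ 0 := hS S le_rfl (ne_of_mem_of_not_mem' ha (Multiset.notMem_zero a))
  exact hab <| eq_of_image_add_erase_eq_erase_zero (zero_mem_subsums S) hsum
    (hS.image_add_erase_sum_eq_erase_zero ha (Nat.le_of_lt_succ (hgain a ha)))
    (hS.image_add_erase_sum_eq_erase_zero hb (Nat.le_of_lt_succ (hgain b hb)))

theorem IsZeroSumFree.card_add_card_toFinset_le_card_subsums (hS : IsZeroSumFree S) :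
    S.card + S.toFinset.card ≤ (subsums S).card := by
  induction S using Multiset.strongInductionOn with
  | ih S ih =>
    obtain hsupp | hsupp := le_or_gt S.toFinset.card 1
    · exact (Nat.add_le_add_left hsupp _).trans hS.card_lt_card_subsums
    · obtain ⟨a, ha, b, hb, hab⟩ := Finset.one_lt_card.1 hsupp
      obtain ⟨c, hc, hgain⟩ := hS.exists_card_subsums_erase_add_two_le
        (Multiset.mem_toFinset.1 ha) (Multiset.mem_toFinset.1 hb) hab
      have hlt : S.erase c < S := Multiset.erase_lt.2 hc
      have hih := ih (S.erase c) hlt (hS.mono hlt.le)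
      have hcard : (S.erase c).card + 1 = S.card := Multiset.card_erase_add_one hc
      have hsupp_card : S.toFinset.card ≤ (S.erase c).toFinset.card + 1 := by
        conv_lhs => rw [← Multiset.cons_erase hc, Multiset.toFinset_cons]
        exact Finset.card_insert_le _ _
      omega

end Cancellation

theorem stmt_12_general {G : Type*} [AddCancelCommMonoid G] [DecidableEq G]
    (S : Multiset G) (hzsf : ∀ T ≤ S, T ≠ 0 → T.sum ≠ 0) :
    Multiset.card S + S.toFinset.card - 1 ≤
      Set.ncard {x : G | ∃ T ≤ S, T ≠ 0 ∧ T.sum = x} := by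
  have hS : IsZeroSumFree S := hzsf
  rw [← hS.coe_subsums_erase_zero, Set.ncard_coe_finset,
    Finset.card_erase_of_mem (zero_mem_subsums S)]
  exact Nat.sub_le_sub_right hS.card_add_card_toFinset_le_card_subsums 1

/-- Lemma: for a zero-sum free sequence `S` over an abelian group `G`,
`|Σ(S)| ≥ |S| + |supp(S)| - 1`. -/
theorem stmt_12 (G : Type*) [AddCommGroup G] [DecidableEq G]
    (S : Multiset G) (hzsf : ∀ T ≤ S, T ≠ 0 → T.sum ≠ 0) :
    Multiset.card S + S.toFinset.card - 1 ≤
      Set.ncard {x : G | ∃ T ≤ S, T ≠ 0 ∧ T.sum = x} :=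
  stmt_12_general S hzsf
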